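/- Let n ≥ 1 and B = B(0,1) ⊂ ℝ^n. There exists a constant C > 0 depending only on n such that for every Young function φ and every measurable u : ℝ^n → [0,∞) vanishing outside B, the function Tu(y) = ∫_B ‖z − y‖^{1−n}·u(z) dz satisfies ‖Tu‖_{L^φ(B)} ≤ C·‖u‖_{L^φ(B)}, where the Luxemburg norms are taken with respect to Lebesgue measure on B. In particular the constant C does not depend on φ. -/

import Mathlib

open MeasureTheory ENNReal

/-- A Young function: a convex, even, nonnegative function `φ : ℝ → [0,∞)`
with `φ t = 0` iff `t = 0`. -/
def IsYoungFunction (φ : ℝ → ℝ) : Prop :=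
  ConvexOn ℝ Set.univ φ ∧ (∀ t, φ (-t) = φ t) ∧ (∀ t, 0 ≤ φ t) ∧ (∀ t, φ t = 0 ↔ t = 0)

/-- The Luxemburg norm `‖f‖_{L^φ} = inf{α > 0 : ∫ φ(f/α) dμ ≤ 1}`,
with the convention `inf ∅ = ∞`. -/
noncomputable def luxNorm {Z : Type*} [MeasurableSpace Z] (φ : ℝ → ℝ) (μ : Measure Z)
    (f : Z → ℝ) : ℝ≥0∞ :=
  sInf (ENNReal.ofReal '' {α : ℝ | 0 < α ∧ ∫⁻ x, ENNReal.ofReal (φ (f x / α)) ∂μ ≤ 1})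

/-- The Luxemburg norm of a `[0,∞]`-valued function, where any set of positive
measure on which the function is infinite forces the modular to be infinite. -/
noncomputable def eluxNorm {Z : Type*} [MeasurableSpace Z] (φ : ℝ → ℝ) (μ : Measure Z)
    (g : Z → ℝ≥0∞) : ℝ≥0∞ :=
  sInf (ENNReal.ofReal '' {α : ℝ | 0 < α ∧
    ∫⁻ x, (if g x = ⊤ then ⊤ else ENNReal.ofReal (φ ((g x).toReal / α))) ∂μ ≤ 1})

open Set in
/-- A supporting line of a Young function at a positive point. -/
lemma IsYoungFunction.exists_supporting_line {φ : ℝ → ℝ} (hφ : IsYoungFunction φ)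
    {a : ℝ} (ha : 0 < a) :
    ∃ m c : ℝ, 0 < m ∧ 0 ≤ c ∧ m * a = φ a + c ∧ ∀ t, m * t ≤ φ t + c := by
  obtain ⟨hconv, -, hnn, hzero⟩ := hφ
  have hint : a ∈ interior (univ : Set ℝ) := by simp
  have hline : ∀ t, derivWithin φ (Ioi a) a * (t - a) ≤ φ t - φ a := by
    intro t
    rcases lt_trichotomy t a with h | rfl | h
    · have h1 := (hconv.slope_le_leftDeriv_of_mem_interior (mem_univ t) hint h).trans
        (hconv.leftDeriv_le_rightDeriv_of_mem_interior hint)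
      rw [slope_def_field, div_le_iff₀ (sub_pos.2 h)] at h1
      linarith
    · simp
    · have h1 := hconv.rightDeriv_le_slope_of_mem_interior hint (mem_univ t) h
      rwa [slope_def_field, le_div_iff₀ (sub_pos.2 h)] at h1
  have h0 := hline 0
  have hφ0 : φ 0 = 0 := (hzero 0).2 rfl
  have hpos : 0 < φ a := lt_of_le_of_ne (hnn a) fun h => ha.ne' ((hzero a).1 h.symm)
  refine ⟨derivWithin φ (Ioi a) a, derivWithin φ (Ioi a) a * a - φ a, ?_, by linarith, by ring,
    fun t => by linarith [hline t]⟩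
  refine pos_of_mul_pos_left (b := a) ?_ ha.le
  linarith

lemma IsYoungFunction.measurable {φ : ℝ → ℝ} (hφ : IsYoungFunction φ) : Measurable φ :=
  (continuousOn_univ.1 (hφ.1.continuousOn isOpen_univ)).measurable

section Jensen

variable {Z : Type*} [MeasurableSpace Z] {μ : Measure Z} {k : Z → ℝ≥0∞} {v : Z → ℝ} {M : ℝ}

lemma lintegral_affine_le {φ : ℝ → ℝ} (hφ : IsYoungFunction φ) (hk : Measurable k)
    (hv : Measurable v) (hkM : ∫⁻ z, k z ∂μ ≤ ENNReal.ofReal M)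
    {m c : ℝ} (hm : 0 ≤ m) (hc : 0 ≤ c) (hline : ∀ t, m * t ≤ φ t + c) :
    ENNReal.ofReal m * ∫⁻ z, k z * ENNReal.ofReal (v z) ∂μ ≤
      (∫⁻ z, k z * ENNReal.ofReal (φ (v z)) ∂μ) + ENNReal.ofReal c * ENNReal.ofReal M := by
  have hφv : Measurable fun z => k z * ENNReal.ofReal (φ (v z)) :=
    hk.mul (hφ.measurable.comp hv).ennreal_ofReal
  calc ENNReal.ofReal m * ∫⁻ z, k z * ENNReal.ofReal (v z) ∂μ
      = ∫⁻ z, ENNReal.ofReal m * (k z * ENNReal.ofReal (v z)) ∂μ :=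
        (lintegral_const_mul _ (hk.mul hv.ennreal_ofReal)).symm
    _ ≤ ∫⁻ z, k z * ENNReal.ofReal (φ (v z)) + ENNReal.ofReal c * k z ∂μ := by
        refine lintegral_mono fun z => ?_
        rw [mul_left_comm, mul_comm _ (k z), ← mul_add, ← ENNReal.ofReal_mul hm,
          ← ENNReal.ofReal_add (hφ.2.2.1 _) hc]
        gcongr
        exact hline _
    _ = (∫⁻ z, k z * ENNReal.ofReal (φ (v z)) ∂μ) + ENNReal.ofReal c * ∫⁻ z, k z ∂μ := by
        rw [lintegral_add_left hφv, lintegral_const_mul _ hk]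
    _ ≤ _ := by gcongr

/-- Jensen's inequality for a kernel of total mass at most `M`, with values in `[0, ∞]`. -/
lemma young_lintegral_div_le {φ : ℝ → ℝ} (hφ : IsYoungFunction φ) (hM : 0 < M)
    (hk : Measurable k) (hv : Measurable v) (hkM : ∫⁻ z, k z ∂μ ≤ ENNReal.ofReal M) :
    (if ∫⁻ z, k z * ENNReal.ofReal (v z) ∂μ = ⊤ then ⊤ else
        ENNReal.ofReal (φ ((∫⁻ z, k z * ENNReal.ofReal (v z) ∂μ).toReal / M))) ≤
      (ENNReal.ofReal M)⁻¹ * ∫⁻ z, k z * ENNReal.ofReal (φ (v z)) ∂μ := by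
  have hM0 : ENNReal.ofReal M ≠ 0 := by simpa using hM
  split_ifs with htop
  · obtain ⟨m, c, hm, hc, -, hline⟩ := hφ.exists_supporting_line one_pos
    have h := lintegral_affine_le hφ hk hv hkM hm.le hc hline
    rw [htop, ENNReal.mul_top (by simpa using hm), top_le_iff, ENNReal.add_eq_top] at h
    rw [h.resolve_right (ENNReal.mul_ne_top ENNReal.ofReal_ne_top ENNReal.ofReal_ne_top),
      ENNReal.mul_top (by simp)]
  · set I := ∫⁻ z, k z * ENNReal.ofReal (v z) ∂μ
    rcases (div_nonneg (ENNReal.toReal_nonneg (a := I)) hM.le).eq_or_lt with h0 | hpos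
    · rw [← h0, (hφ.2.2.2 0).2 rfl]
      simp
    · obtain ⟨m, c, hm, hc, heq, hline⟩ := hφ.exists_supporting_line hpos
      have h := lintegral_affine_le hφ hk hv hkM hm.le hc hline
      rw [← ENNReal.mul_le_iff_le_inv hM0 ENNReal.ofReal_ne_top]
      refine (ENNReal.add_le_add_iff_right
        (ENNReal.mul_ne_top ENNReal.ofReal_ne_top ENNReal.ofReal_ne_top)).1 (le_trans (le_of_eq ?_) h)
      rw [mul_comm (ENNReal.ofReal M), ← add_mul, ← ENNReal.ofReal_add (hφ.2.2.1 _) hc, ← heq,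
        ← ENNReal.ofReal_mul (by positivity), mul_assoc, div_mul_cancel₀ _ hM.ne',
        ENNReal.ofReal_mul hm.le, ENNReal.ofReal_toReal htop]

end Jensen

/-- A Schur-type test: an integral operator with nonnegative kernel whose two marginals are
bounded by `M` has norm at most `M` on every Orlicz space. -/
lemma eluxNorm_lintegral_le {Z : Type*} [MeasurableSpace Z] {μ : Measure Z} [SFinite μ]
    {φ : ℝ → ℝ} (hφ : IsYoungFunction φ) {K : Z → Z → ℝ≥0∞}
    (hK : Measurable (Function.uncurry K)) {M : ℝ} (hM : 0 < M)
    (hrow : ∀ᵐ y ∂μ, ∫⁻ z, K z y ∂μ ≤ ENNReal.ofReal M)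
    (hcol : ∀ᵐ z ∂μ, ∫⁻ y, K z y ∂μ ≤ ENNReal.ofReal M)
    {u : Z → ℝ} (hu : Measurable u) :
    eluxNorm φ μ (fun y => ∫⁻ z, K z y * ENNReal.ofReal (u z) ∂μ) ≤
      ENNReal.ofReal M * luxNorm φ μ u := by
  have hM0 : ENNReal.ofReal M ≠ 0 := by simpa using hM
  rw [luxNorm, sInf_eq_iInf', ENNReal.mul_iInf_of_ne hM0 ENNReal.ofReal_ne_top]
  refine le_iInf ?_
  rintro ⟨_, α, ⟨hα, hmod⟩, rfl⟩
  rw [← ENNReal.ofReal_mul hM.le]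
  refine sInf_le ⟨M * α, ⟨mul_pos hM hα, ?_⟩, rfl⟩
  have hv : Measurable fun z => u z / α := hu.div_const α
  have hφv : Measurable fun z => ENNReal.ofReal (φ (u z / α)) :=
    (hφ.measurable.comp hv).ennreal_ofReal
  have hKy : ∀ y, Measurable fun z => K z y := fun y => hK.comp measurable_prodMk_right
  have hscale : ∀ y, ∫⁻ z, K z y * ENNReal.ofReal (u z) ∂μ =
      ENNReal.ofReal α * ∫⁻ z, K z y * ENNReal.ofReal (u z / α) ∂μ := by
    intro y
    have hKv : Measurable fun z => K z y * ENNReal.ofReal (u z / α) :=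
      (hKy y).mul hv.ennreal_ofReal
    rw [← lintegral_const_mul _ hKv]
    refine lintegral_congr fun z => ?_
    rw [mul_left_comm, ← ENNReal.ofReal_mul hα.le, mul_div_cancel₀ _ hα.ne']
  have hα0 : ENNReal.ofReal α ≠ 0 := by simpa using hα
  have hjensen : ∀ᵐ y ∂μ, (if ∫⁻ z, K z y * ENNReal.ofReal (u z) ∂μ = ⊤ then ⊤ else
      ENNReal.ofReal (φ ((∫⁻ z, K z y * ENNReal.ofReal (u z) ∂μ).toReal / (M * α)))) ≤
      (ENNReal.ofReal M)⁻¹ * ∫⁻ z, K z y * ENNReal.ofReal (φ (u z / α)) ∂μ := by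
    filter_upwards [hrow] with y hy
    refine le_trans (le_of_eq ?_) (young_lintegral_div_le hφ hM (hKy y) hv hy)
    rw [hscale y, ENNReal.toReal_mul, ENNReal.toReal_ofReal hα.le, mul_comm M α,
      mul_div_mul_left _ _ hα.ne']
    simp only [ENNReal.mul_eq_top, hα0, ENNReal.ofReal_ne_top, ne_eq, not_false_eq_true,
      true_and, false_and, or_false]
  have hprod : Measurable fun p : Z × Z => K p.2 p.1 * ENNReal.ofReal (φ (u p.2 / α)) :=
    (hK.comp measurable_swap).mul (hφv.comp measurable_snd)
  calc _ ≤ ∫⁻ y, (ENNReal.ofReal M)⁻¹ * ∫⁻ z, K z y * ENNReal.ofReal (φ (u z / α)) ∂μ ∂μ :=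
        lintegral_mono_ae hjensen
    _ = (ENNReal.ofReal M)⁻¹ * ∫⁻ z, ∫⁻ y, K z y * ENNReal.ofReal (φ (u z / α)) ∂μ ∂μ := by
        rw [lintegral_const_mul _ hprod.lintegral_prod_right',
          lintegral_lintegral_swap hprod.aemeasurable]
    _ ≤ (ENNReal.ofReal M)⁻¹ * ∫⁻ z, ENNReal.ofReal M * ENNReal.ofReal (φ (u z / α)) ∂μ := by
        refine mul_le_mul_right (lintegral_mono_ae ?_) _
        filter_upwards [hcol] with z hz
        have hKz : Measurable fun y => K z y := hK.comp measurable_prodMk_left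
        rw [lintegral_mul_const _ hKz]
        exact mul_le_mul_left hz _
    _ = ∫⁻ z, ENNReal.ofReal (φ (u z / α)) ∂μ := by
        rw [lintegral_const_mul _ hφv, ← mul_assoc,
          ENNReal.inv_mul_cancel hM0 ENNReal.ofReal_ne_top, one_mul]
    _ ≤ 1 := hmod

lemma lintegral_norm_rpow_ball_lt_top (n : ℕ) (hn : 1 ≤ n) (r : ℝ) :
    ∫⁻ w in Metric.ball (0 : EuclideanSpace ℝ (Fin n)) r,
      ENNReal.ofReal (‖w‖ ^ ((1 : ℝ) - n)) < ⊤ := by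
  have : Nonempty (Fin n) := ⟨⟨0, hn⟩⟩
  have hint : IntegrableOn (fun w : EuclideanSpace ℝ (Fin n) => ‖w‖ ^ ((1 : ℝ) - n))
      (Metric.ball 0 r) volume := by
    rw [integrableOn_fun_norm_addHaar volume (f := fun t : ℝ => t ^ ((1 : ℝ) - n))]
    have hone : IntegrableOn (fun _ : ℝ => (1 : ℝ)) (Set.Ioo 0 r) volume := by simp
    refine hone.congr_fun (fun t ht => ?_) measurableSet_Ioo
    simp only [finrank_euclideanSpace, Fintype.card_fin, smul_eq_mul]
    rw [← Real.rpow_natCast, ← Real.rpow_add ht.1, Nat.cast_sub hn]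
    simp
  exact hint.lintegral_lt_top

/-- Every unit-ball marginal of the kernel is bounded by its integral over the ball of radius 2. -/
lemma setLIntegral_norm_sub_rpow_le (n : ℕ) {y : EuclideanSpace ℝ (Fin n)}
    (hy : y ∈ Metric.ball (0 : EuclideanSpace ℝ (Fin n)) 1) :
    ∫⁻ z in Metric.ball (0 : EuclideanSpace ℝ (Fin n)) 1,
        ENNReal.ofReal (‖z - y‖ ^ ((1 : ℝ) - n)) ≤
      ∫⁻ w in Metric.ball (0 : EuclideanSpace ℝ (Fin n)) 2,
        ENNReal.ofReal (‖w‖ ^ ((1 : ℝ) - n)) := by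
  rw [← lintegral_indicator measurableSet_ball, ← lintegral_indicator measurableSet_ball,
    ← lintegral_sub_right_eq_self (Set.indicator (Metric.ball 0 2) _) y]
  refine lintegral_mono fun z => ?_
  by_cases hz : z ∈ Metric.ball (0 : EuclideanSpace ℝ (Fin n)) 1
  swap
  · simp [Set.indicator_of_notMem hz]
  have hmem : z - y ∈ Metric.ball (0 : EuclideanSpace ℝ (Fin n)) 2 := by
    rw [mem_ball_zero_iff] at *
    linarith [norm_sub_le z y]
  rw [Set.indicator_of_mem hz, Set.indicator_of_mem hmem]

/-- Orlicz boundedness of the Riesz-type potential `Tu(y) = ∫_B ‖z−y‖^{1−n} u(z) dz`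
on the unit ball `B ⊂ ℝ^n`, with a constant independent of the Young function `φ`. -/
theorem riesz_potential_orlicz_bounded (n : ℕ) (hn : 1 ≤ n) :
    ∃ C : ℝ, 0 < C ∧ ∀ φ : ℝ → ℝ, IsYoungFunction φ →
      ∀ u : EuclideanSpace ℝ (Fin n) → ℝ, Measurable u → (∀ x, 0 ≤ u x) →
        (∀ x, x ∉ Metric.ball (0 : EuclideanSpace ℝ (Fin n)) 1 → u x = 0) →
        eluxNorm φ (volume.restrict (Metric.ball (0 : EuclideanSpace ℝ (Fin n)) 1))
            (fun y => ∫⁻ z in Metric.ball (0 : EuclideanSpace ℝ (Fin n)) 1,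
              ENNReal.ofReal (‖z - y‖ ^ ((1 : ℝ) - n)) * ENNReal.ofReal (u z)) ≤
          ENNReal.ofReal C *
            luxNorm φ (volume.restrict (Metric.ball (0 : EuclideanSpace ℝ (Fin n)) 1)) u := by
  set L := ∫⁻ w in Metric.ball (0 : EuclideanSpace ℝ (Fin n)) 2,
    ENNReal.ofReal (‖w‖ ^ ((1 : ℝ) - n))
  have hL : L ≤ ENNReal.ofReal (L.toReal + 1) :=
    (ENNReal.ofReal_toReal (lintegral_norm_rpow_ball_lt_top n hn 2).ne).symm.le.trans
      (ENNReal.ofReal_le_ofReal (le_add_of_nonneg_right zero_le_one))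
  refine ⟨L.toReal + 1, by positivity, fun φ hφ u hu _ _ => ?_⟩
  refine eluxNorm_lintegral_le (K := fun z y => ENNReal.ofReal (‖z - y‖ ^ ((1 : ℝ) - n)))
    hφ ?_ (by positivity) ?_ ?_ hu
  · exact ((measurable_fst.sub measurable_snd).norm.pow_const _).ennreal_ofReal
  · filter_upwards [ae_restrict_mem measurableSet_ball] with y hy
    exact (setLIntegral_norm_sub_rpow_le n hy).trans hL
  · filter_upwards [ae_restrict_mem measurableSet_ball] with z hz
    simp_rw [norm_sub_rev z]
    exact (setLIntegral_norm_sub_rpow_le n hz).trans hL
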